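/- Let N ≥ 1, s ∈ (0,1), and let Φ : (−1/2, 1/2) × ℝ^N → ℝ^N, written Φ_t(x) := Φ(t,x), satisfy: Φ_0 = id; there is c ≥ 1 with c⁻¹|u−v| ≤ |Φ_t(u) − Φ_t(v)| ≤ c|u−v| for all t, u, v; for each t the map x ↦ Φ_t(x) is differentiable with derivative D_xΦ_t satisfying ‖D_xΦ_t(u)‖ ≤ C₀ and ‖D_xΦ_t(u) − D_xΦ_t(v)‖ ≤ C₀|u−v|; for each x the maps t ↦ Φ_t(x) and t ↦ D_xΦ_t(x) are differentiable in t, with ∂_t D_xΦ_t(x) = D_x(∂_tΦ_t)(x), and the vector field V_t := ∂_tΦ_t satisfies, for all t, u, v: |V_t(u) − V_t(v)| ≤ C₀|u−v|, ‖D_xV_t(u)‖ ≤ C₀, ‖D_xV_t(u) − D_xV_t(v)‖ ≤ C₀|u−v|, and t ↦ V_t(x) and t ↦ D_xV_t(x) are continuous. Define κ_t(y,z) := (c_{N,s}/2) · det(D_xΦ_t(y)) · det(D_xΦ_t(z)) / |Φ_t(y) − Φ_t(z)|^{N+2s} for y ≠ z (so κ_0(y,z) = (c_{N,s}/2)|y−z|^{−N−2s}),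 and for t ≠ 0 set κ̄_t(y,z) := (κ_t(y,z) − κ_0(y,z))/t and κ̄_t^o(y,z) := (κ̄_t(y,y+z) − κ̄_t(y,y−z))/2. Then there exists C > 0, independent of t, y, z, such that for all t ≠ 0 in (−1/2,1/2), all y ∈ ℝ^N and all z ∈ ℝ^N with z ≠ 0: |κ̄_t^o(y,z)| ≤ C · min( |z|^{−N−2s}, |z|^{1−N−2s} ). -/

import Mathlib

/-!
Write `p = N + 2s`, `m = min 1 |z|`, and fix `y`, `z`. Put `a = (Φ_τ(y+z) - Φ_τ(y)) / |z|` and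
`b = (Φ_τ(y) - Φ_τ(y-z)) / |z|`. With the single function `g(E, D, a) = det E · det D · |a|^{-p}`,
both kernels take the form
`κ_τ(y, y ± z) = (c_{N,s}/2) |z|^{-p} g(P_±(τ))`, where
`P_+ = (DΦ_τ(y), DΦ_τ(y+z), a)` and `P_- = (DΦ_τ(y), DΦ_τ(y-z), b)`.

The bi-Lipschitz bound keeps `P_±` in a fixed compact set on which `g` is smooth, so that `Dg` is
bounded and Lipschitz there. The `C^{1,1}` bounds on `Φ_τ` and `V_τ` make `P_+ - P_-` and its
`τ`-derivative `O(m)`: a second symmetric difference of a Lipschitz function with Lipschitz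
derivative is `O(m |z|)` (`norm_symm_diff_le`). Hence
`d/dτ [g(P_+(τ)) - g(P_-(τ))] = O(m)`, and the mean value inequality in `τ` gives
`|[g(P_+(t)) - g(P_+(0))] - [g(P_-(t)) - g(P_-(0))]| ≤ C m |t|` (`exists_incr_diff_bound`).
The claim follows from `|z|^{-p} m = min (|z|^{-p}) (|z|^{1-p})`.
-/

noncomputable section

/-- The normalizing constant `c_{N,s} = π^{-N/2} s 4^s Γ((N+2s)/2) / Γ(1-s)`. -/
def cNs (N : ℕ) (s : ℝ) : ℝ :=
  Real.pi ^ (-(N : ℝ) / 2) * s * (4 : ℝ) ^ s *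
    Real.Gamma (((N : ℝ) + 2 * s) / 2) / Real.Gamma (1 - s)

/-- The deformed kernel
`κ_t(y,z) = (c_{N,s}/2) det(D_xΦ_t(y)) det(D_xΦ_t(z)) / |Φ_t(y) - Φ_t(z)|^{N+2s}`. -/
def kappa (N : ℕ) (s : ℝ)
    (Φ : ℝ → EuclideanSpace ℝ (Fin N) → EuclideanSpace ℝ (Fin N)) (t : ℝ)
    (y z : EuclideanSpace ℝ (Fin N)) : ℝ :=
  cNs N s / 2 * ((fderiv ℝ (Φ t) y).det * (fderiv ℝ (Φ t) z).det) /
    ‖Φ t y - Φ t z‖ ^ ((N : ℝ) + 2 * s)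

lemma contDiff_clm_det {N : ℕ} :
    ContDiff ℝ 2 (fun A : EuclideanSpace ℝ (Fin N) →L[ℝ] EuclideanSpace ℝ (Fin N) => A.det) := by
  let b := (EuclideanSpace.basisFun (Fin N) ℝ).toBasis
  have h : (fun A : EuclideanSpace ℝ (Fin N) →L[ℝ] EuclideanSpace ℝ (Fin N) => A.det)
      = fun A => ∑ σ : Equiv.Perm (Fin N), ((Equiv.Perm.sign σ : ℤ) : ℝ) *
          ∏ i, A (EuclideanSpace.basisFun (Fin N) ℝ i) (σ i) := by
    funext A
    rw [ContinuousLinearMap.det, ← LinearMap.det_toMatrix b, Matrix.det_apply']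
    simp [LinearMap.toMatrix_apply, b]
  rw [h]
  refine ContDiff.sum fun σ _ => contDiff_const.mul (contDiff_prod fun i _ => ?_)
  exact (contDiff_euclidean.1 (contDiff_id.clm_apply contDiff_const)) (σ i)

/-- The function `(E, D, a) ↦ det E · det D · |a|^{-p}` through which the kernel is expressed. -/
def kernelFun (N : ℕ) (p : ℝ)
    (x : (EuclideanSpace ℝ (Fin N) →L[ℝ] EuclideanSpace ℝ (Fin N)) ×
      (EuclideanSpace ℝ (Fin N) →L[ℝ] EuclideanSpace ℝ (Fin N)) × EuclideanSpace ℝ (Fin N)) : ℝ :=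
  x.1.det * x.2.1.det * ‖x.2.2‖ ^ (-p)

lemma contDiffAt_kernelFun {N : ℕ} (p : ℝ)
    {x : (EuclideanSpace ℝ (Fin N) →L[ℝ] EuclideanSpace ℝ (Fin N)) ×
      (EuclideanSpace ℝ (Fin N) →L[ℝ] EuclideanSpace ℝ (Fin N)) × EuclideanSpace ℝ (Fin N)}
    (hx : x.2.2 ≠ 0) : ContDiffAt ℝ 2 (kernelFun N p) x := by
  unfold kernelFun
  refine ContDiffAt.mul (ContDiffAt.mul ?_ ?_) ?_
  · exact (contDiff_clm_det.comp contDiff_fst).contDiffAt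
  · exact (contDiff_clm_det.comp (contDiff_fst.comp contDiff_snd)).contDiffAt
  · refine ContDiffAt.rpow_const_of_ne ?_ (norm_ne_zero_iff.2 hx)
    exact ContDiffAt.norm ℝ (contDiff_snd.comp contDiff_snd).contDiffAt hx

/-- If two curves in a compact set on which `g` is `C²` are `C¹`-close of order `m`, then the
increments of `g` along them between times `0` and `t` differ by `O(m |t|)`. -/
lemma exists_incr_diff_bound {X : Type*} [NormedAddCommGroup X] [NormedSpace ℝ X]
    {g : X → ℝ} {K : Set X} (hK : IsCompact K) (hg : ∀ x ∈ K, ContDiffAt ℝ 2 g x)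
    {M : ℝ} (hM : 0 < M) :
    ∃ C > 0, ∀ (P Q P' Q' : ℝ → X) (m : ℝ), 0 ≤ m →
      (∀ t ∈ Set.Ioo (-(1/2) : ℝ) (1/2), HasDerivAt P (P' t) t) →
      (∀ t ∈ Set.Ioo (-(1/2) : ℝ) (1/2), HasDerivAt Q (Q' t) t) →
      (∀ t ∈ Set.Ioo (-(1/2) : ℝ) (1/2), P t ∈ K) →
      (∀ t ∈ Set.Ioo (-(1/2) : ℝ) (1/2), Q t ∈ K) →
      (∀ t ∈ Set.Ioo (-(1/2) : ℝ) (1/2), ‖P' t‖ ≤ M) →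
      (∀ t ∈ Set.Ioo (-(1/2) : ℝ) (1/2), ‖P t - Q t‖ ≤ 2 * M * m) →
      (∀ t ∈ Set.Ioo (-(1/2) : ℝ) (1/2), ‖P' t - Q' t‖ ≤ 2 * M * m) →
      ∀ t ∈ Set.Ioo (-(1/2) : ℝ) (1/2),
        |(g (P t) - g (P 0)) - (g (Q t) - g (Q 0))| ≤ C * m * |t| := by
  have hg1 : ∀ x ∈ K, ContDiffAt ℝ 1 (fderiv ℝ g) x := fun x hx =>
    (hg x hx).fderiv_right (by norm_num)
  -- `K` need not be convex: the global Lipschitz bound comes from compactness.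
  have hloc : LocallyLipschitzOn K (fderiv ℝ g) := by
    intro x hx
    obtain ⟨L, u, hu, hL⟩ := (hg1 x hx).exists_lipschitzOnWith
    exact ⟨L, u, mem_nhdsWithin_of_mem_nhds hu, hL⟩
  obtain ⟨L, hL⟩ := hloc.exists_lipschitzOnWith_of_compact hK
  obtain ⟨D, hD⟩ := hK.exists_bound_of_continuousOn hloc.continuousOn
  refine ⟨L * (2 * M) * M + (|D| + 1) * (2 * M), by positivity, ?_⟩
  intro P Q P' Q' m hm hP hQ hPK hQK hPb hPQ hPQ' t ht
  have h0 : (0 : ℝ) ∈ Set.Ioo (-(1/2) : ℝ) (1/2) := by norm_num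
  have hder : ∀ τ ∈ Set.Ioo (-(1/2) : ℝ) (1/2),
      HasDerivAt (fun τ => g (P τ) - g (Q τ))
        (fderiv ℝ g (P τ) (P' τ) - fderiv ℝ g (Q τ) (Q' τ)) τ := by
    intro τ hτ
    have hp := ((hg _ (hPK τ hτ)).differentiableAt (by norm_num)).hasFDerivAt
    have hq := ((hg _ (hQK τ hτ)).differentiableAt (by norm_num)).hasFDerivAt
    exact (hp.comp_hasDerivAt τ (hP τ hτ)).sub (hq.comp_hasDerivAt τ (hQ τ hτ))
  have key := (convex_Ioo (-(1/2) : ℝ) (1/2)).norm_image_sub_le_of_norm_hasDerivWithin_le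
    (C := (L * (2 * M) * M + (|D| + 1) * (2 * M)) * m)
    (fun τ hτ => (hder τ hτ).hasDerivWithinAt) ?_ h0 ht
  · rw [sub_zero, Real.norm_eq_abs, Real.norm_eq_abs] at key
    convert key using 2
    ring
  · intro τ hτ
    have e : fderiv ℝ g (P τ) (P' τ) - fderiv ℝ g (Q τ) (Q' τ)
        = (fderiv ℝ g (P τ) - fderiv ℝ g (Q τ)) (P' τ) + fderiv ℝ g (Q τ) (P' τ - Q' τ) := by
      simp
    rw [e]
    have h1 : ‖fderiv ℝ g (P τ) - fderiv ℝ g (Q τ)‖ ≤ L * (2 * M * m) :=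
      (hL.norm_sub_le (hPK τ hτ) (hQK τ hτ)).trans
        (mul_le_mul_of_nonneg_left (hPQ τ hτ) L.2)
    have h2 : ‖fderiv ℝ g (Q τ)‖ ≤ |D| + 1 := by
      linarith [hD _ (hQK τ hτ), le_abs_self D]
    calc _ ≤ ‖(fderiv ℝ g (P τ) - fderiv ℝ g (Q τ)) (P' τ)‖
          + ‖fderiv ℝ g (Q τ) (P' τ - Q' τ)‖ := norm_add_le _ _
      _ ≤ L * (2 * M * m) * M + (|D| + 1) * (2 * M * m) :=
        add_le_add
          (((fderiv ℝ g (P τ) - fderiv ℝ g (Q τ)).le_of_opNorm_le h1 _).trans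
            (mul_le_mul_of_nonneg_left (hPb τ hτ) (by positivity)))
          (((fderiv ℝ g (Q τ)).le_of_opNorm_le h2 _).trans
            (mul_le_mul_of_nonneg_left (hPQ' τ hτ) (by positivity)))
      _ = _ := by ring

lemma norm_symm_diff_le {E : Type*} [NormedAddCommGroup E] [NormedSpace ℝ E] {f : E → E} {M : ℝ}
    (hM : 0 ≤ M) (hf : Differentiable ℝ f) (hlip : ∀ u v, ‖f u - f v‖ ≤ M * ‖u - v‖)
    (hD : ∀ u v, ‖fderiv ℝ f u - fderiv ℝ f v‖ ≤ M * ‖u - v‖) (y z : E) :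
    ‖(f (y + z) - f y) - (f y - f (y - z))‖ ≤ 2 * M * min 1 ‖z‖ * ‖z‖ := by
  have tay : ∀ w : E, ‖w‖ = ‖z‖ → ‖f (y + w) - f y - fderiv ℝ f y w‖ ≤ M * ‖z‖ * ‖z‖ := by
    intro w hw
    have := (convex_closedBall y ‖z‖).norm_image_sub_le_of_norm_fderiv_le' (𝕜 := ℝ) (f := f)
      (φ := fderiv ℝ f y) (C := M * ‖z‖) (x := y) (y := y + w) (fun x _ => hf x) ?_ (by simp)
      (by simp [hw])
    · simpa [hw] using this
    · intro x hx
      exact (hD x y).trans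
        (mul_le_mul_of_nonneg_left (by simpa [dist_eq_norm] using hx) hM)
  rw [mul_assoc, min_mul_of_nonneg _ _ (norm_nonneg z), mul_min_of_nonneg _ _ (by positivity)]
  refine le_min ?_ ?_
  · have h1 := hlip (y + z) y
    have h2 := hlip y (y - z)
    rw [add_sub_cancel_left] at h1
    rw [sub_sub_cancel] at h2
    linarith [norm_sub_le (f (y + z) - f y) (f y - f (y - z))]
  · have h1 := tay z rfl
    have h2 := tay (-z) (norm_neg z)
    have e : (f (y + z) - f y) - (f y - f (y - z))
        = (f (y + z) - f y - fderiv ℝ f y z) + (f (y + -z) - f y - fderiv ℝ f y (-z)) := by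
      rw [map_neg, ← sub_eq_add_neg y z]; abel
    rw [e]
    linarith [norm_add_le (f (y + z) - f y - fderiv ℝ f y z)
      (f (y + -z) - f y - fderiv ℝ f y (-z))]

lemma norm_sub_le_min {E F : Type*} [NormedAddCommGroup E] [NormedSpace ℝ E]
    [NormedAddCommGroup F] {f : E → F} {M : ℝ}
    (hM : 0 ≤ M) (hb : ∀ u, ‖f u‖ ≤ M) (hlip : ∀ u v, ‖f u - f v‖ ≤ M * ‖u - v‖) (y z : E) :
    ‖f (y + z) - f (y - z)‖ ≤ 2 * M * min 1 ‖z‖ := by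
  rw [mul_min_of_nonneg _ _ (by positivity)]
  refine le_min ?_ ?_
  · linarith [norm_sub_le (f (y + z)) (f (y - z)), hb (y + z), hb (y - z)]
  · have h := hlip (y + z) (y - z)
    have e : y + z - (y - z) = (2 : ℝ) • z := by rw [two_smul]; abel
    rw [e, norm_smul, Real.norm_two] at h
    linarith

lemma kappa_eq_kernelFun {N : ℕ} {s : ℝ}
    {Φ : ℝ → EuclideanSpace ℝ (Fin N) → EuclideanSpace ℝ (Fin N)} {t r : ℝ} (hr : 0 < r)
    {y w a : EuclideanSpace ℝ (Fin N)} (ha : ‖Φ t y - Φ t w‖ = ‖a‖) :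
    kappa N s Φ t y w = cNs N s / 2 * r ^ (-((N : ℝ) + 2 * s)) *
      kernelFun N ((N : ℝ) + 2 * s) (fderiv ℝ (Φ t) y, fderiv ℝ (Φ t) w, r⁻¹ • a) := by
  have h : r ^ (-((N : ℝ) + 2 * s)) * ‖r⁻¹ • a‖ ^ (-((N : ℝ) + 2 * s))
      = (‖a‖ ^ ((N : ℝ) + 2 * s))⁻¹ := by
    rw [← Real.mul_rpow hr.le (norm_nonneg _), norm_smul, norm_inv, Real.norm_of_nonneg hr.le,
      mul_inv_cancel_left₀ hr.ne', Real.rpow_neg (norm_nonneg _)]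
  rw [kappa, kernelFun, ha, div_eq_mul_inv, ← h]
  ring

/-- Bound on the odd part of the difference quotient of the deformed kernel:
`|κ̄_t^o(y,z)| ≤ C min(|z|^{-N-2s}, |z|^{1-N-2s})` uniformly in `t`. -/
theorem statement6 (N : ℕ) (hN : 1 ≤ N) (s : ℝ) (hs : s ∈ Set.Ioo (0 : ℝ) 1)
    (Φ V : ℝ → EuclideanSpace ℝ (Fin N) → EuclideanSpace ℝ (Fin N))
    (c : ℝ) (hc : 1 ≤ c) (C₀ : ℝ) (hC₀ : 0 < C₀)
    (hΦ0 : Φ 0 = id)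
    (hlow : ∀ t ∈ Set.Ioo (-(1/2) : ℝ) (1/2), ∀ u v,
      c⁻¹ * ‖u - v‖ ≤ ‖Φ t u - Φ t v‖)
    (hup : ∀ t ∈ Set.Ioo (-(1/2) : ℝ) (1/2), ∀ u v,
      ‖Φ t u - Φ t v‖ ≤ c * ‖u - v‖)
    (hdiffx : ∀ t ∈ Set.Ioo (-(1/2) : ℝ) (1/2), Differentiable ℝ (Φ t))
    (hDbound : ∀ t ∈ Set.Ioo (-(1/2) : ℝ) (1/2), ∀ u, ‖fderiv ℝ (Φ t) u‖ ≤ C₀)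
    (hDlip : ∀ t ∈ Set.Ioo (-(1/2) : ℝ) (1/2), ∀ u v,
      ‖fderiv ℝ (Φ t) u - fderiv ℝ (Φ t) v‖ ≤ C₀ * ‖u - v‖)
    (hderivt : ∀ x, ∀ t ∈ Set.Ioo (-(1/2) : ℝ) (1/2),
      HasDerivAt (fun τ => Φ τ x) (V t x) t)
    (hderivtD : ∀ x, ∀ t ∈ Set.Ioo (-(1/2) : ℝ) (1/2),
      HasDerivAt (fun τ => fderiv ℝ (Φ τ) x) (fderiv ℝ (V t) x) t)
    (hVlip : ∀ t ∈ Set.Ioo (-(1/2) : ℝ) (1/2), ∀ u v,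
      ‖V t u - V t v‖ ≤ C₀ * ‖u - v‖)
    (hVdiff : ∀ t ∈ Set.Ioo (-(1/2) : ℝ) (1/2), Differentiable ℝ (V t))
    (hDVbound : ∀ t ∈ Set.Ioo (-(1/2) : ℝ) (1/2), ∀ u, ‖fderiv ℝ (V t) u‖ ≤ C₀)
    (hDVlip : ∀ t ∈ Set.Ioo (-(1/2) : ℝ) (1/2), ∀ u v,
      ‖fderiv ℝ (V t) u - fderiv ℝ (V t) v‖ ≤ C₀ * ‖u - v‖)
    (hVcont : ∀ x, ContinuousOn (fun t => V t x) (Set.Ioo (-(1/2) : ℝ) (1/2)))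
    (hDVcont : ∀ x, ContinuousOn (fun t => fderiv ℝ (V t) x) (Set.Ioo (-(1/2) : ℝ) (1/2))) :
    ∃ C > 0, ∀ t ∈ Set.Ioo (-(1/2) : ℝ) (1/2), t ≠ 0 →
      ∀ y z : EuclideanSpace ℝ (Fin N), z ≠ 0 →
        |((kappa N s Φ t y (y + z) - kappa N s Φ 0 y (y + z)) / t -
            (kappa N s Φ t y (y - z) - kappa N s Φ 0 y (y - z)) / t) / 2| ≤
          C * min (‖z‖ ^ (-(N : ℝ) - 2 * s)) (‖z‖ ^ (1 - (N : ℝ) - 2 * s)) := by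
  have hc0 : 0 < c := by linarith
  set M : ℝ := c + C₀ with hM
  have hM0 : 0 < M := by positivity
  have hcM : c ≤ M := by linarith
  have hCM : C₀ ≤ M := by linarith
  set p : ℝ := (N : ℝ) + 2 * s with hp
  let E := EuclideanSpace ℝ (Fin N)
  -- The compact set containing the rescaled data `P_±(τ)` for all `τ`, `y`, `z`.
  let K : Set ((E →L[ℝ] E) × (E →L[ℝ] E) × E) :=
    Metric.closedBall 0 C₀ ×ˢ Metric.closedBall 0 C₀ ×ˢ (Metric.closedBall 0 c ∩ {a | c⁻¹ ≤ ‖a‖})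
  have hK : IsCompact K := by
    have : ProperSpace (E →L[ℝ] E) := FiniteDimensional.proper ℝ _
    refine (isCompact_closedBall _ _).prod ((isCompact_closedBall _ _).prod
      ((isCompact_closedBall _ _).inter_right ?_))
    exact isClosed_le continuous_const continuous_norm
  have hg : ∀ x ∈ K, ContDiffAt ℝ 2 (kernelFun N p) x := by
    rintro ⟨A, B, a⟩ ⟨-, -, -, ha⟩
    refine contDiffAt_kernelFun p ?_
    have ha' : c⁻¹ ≤ ‖a‖ := ha
    exact norm_pos_iff.1 ((inv_pos.2 hc0).trans_le ha')
  obtain ⟨C, hC, hbound⟩ := exists_incr_diff_bound hK hg hM0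
  refine ⟨(|cNs N s / 2| + 1) * C, by positivity, ?_⟩
  intro t ht ht0 y z hz
  set r : ℝ := ‖z‖ with hr
  have hr0 : 0 < r := norm_pos_iff.2 hz
  have hmemK : ∀ τ ∈ Set.Ioo (-(1/2) : ℝ) (1/2), ∀ u v w : E, ‖v - w‖ = r → ∀ u' : E,
      ((fderiv ℝ (Φ τ) u, fderiv ℝ (Φ τ) u', r⁻¹ • (Φ τ v - Φ τ w)) :
        (E →L[ℝ] E) × (E →L[ℝ] E) × E) ∈ K := by
    intro τ hτ u v w hvw u'
    have h1 := hlow τ hτ v w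
    have h2 := hup τ hτ v w
    rw [hvw] at h1 h2
    refine ⟨by simpa using hDbound τ hτ u, by simpa using hDbound τ hτ u', ?_, ?_⟩
    · rw [mem_closedBall_zero_iff, norm_smul, norm_inv, Real.norm_of_nonneg hr0.le,
        inv_mul_le_iff₀ hr0]
      linarith
    · change c⁻¹ ≤ ‖r⁻¹ • (Φ τ v - Φ τ w)‖
      rw [norm_smul, norm_inv, Real.norm_of_nonneg hr0.le, le_inv_mul_iff₀ hr0]
      linarith
  have hz1 : ‖y + z - y‖ = r := by simp [hr]
  have hz2 : ‖y - (y - z)‖ = r := by simp [hr]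
  have hscale : ∀ {b : E} {B : ℝ}, ‖b‖ ≤ B * r → ‖r⁻¹ • b‖ ≤ B := by
    intro b B hb
    rw [norm_smul, norm_inv, Real.norm_of_nonneg hr0.le, inv_mul_le_iff₀ hr0]
    linarith
  have hmono : ∀ {B x : ℝ}, B ≤ C₀ * x → 0 ≤ x → B ≤ M * x := fun hB hx =>
    hB.trans (mul_le_mul_of_nonneg_right hCM hx)
  have hm0 : 0 ≤ min 1 r := le_min zero_le_one hr0.le
  have main := hbound
    (fun τ => (fderiv ℝ (Φ τ) y, fderiv ℝ (Φ τ) (y + z), r⁻¹ • (Φ τ (y + z) - Φ τ y)))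
    (fun τ => (fderiv ℝ (Φ τ) y, fderiv ℝ (Φ τ) (y - z), r⁻¹ • (Φ τ y - Φ τ (y - z))))
    (fun τ => (fderiv ℝ (V τ) y, fderiv ℝ (V τ) (y + z), r⁻¹ • (V τ (y + z) - V τ y)))
    (fun τ => (fderiv ℝ (V τ) y, fderiv ℝ (V τ) (y - z), r⁻¹ • (V τ y - V τ (y - z))))
    (min 1 r) hm0
    (fun τ hτ => (hderivtD y τ hτ).prodMk ((hderivtD (y + z) τ hτ).prodMk
      (((hderivt (y + z) τ hτ).sub (hderivt y τ hτ)).const_smul r⁻¹)))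
    (fun τ hτ => (hderivtD y τ hτ).prodMk ((hderivtD (y - z) τ hτ).prodMk
      (((hderivt y τ hτ).sub (hderivt (y - z) τ hτ)).const_smul r⁻¹)))
    (fun τ hτ => hmemK τ hτ _ _ _ hz1 _)
    (fun τ hτ => hmemK τ hτ _ _ _ hz2 _)
    (by
      intro τ hτ
      refine norm_prod_le_iff.2 ⟨(hDVbound τ hτ _).trans hCM,
        norm_prod_le_iff.2 ⟨(hDVbound τ hτ _).trans hCM, hscale ?_⟩⟩
      have := hVlip τ hτ (y + z) y
      rw [hz1] at this
      exact hmono this hr0.le)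
    (by
      intro τ hτ
      refine norm_prod_le_iff.2 ⟨by simpa using by positivity, norm_prod_le_iff.2 ⟨?_, ?_⟩⟩
      · exact norm_sub_le_min hM0.le (fun u => (hDbound τ hτ u).trans hCM)
          (fun u v => hmono (hDlip τ hτ u v) (norm_nonneg _)) y z
      · simp only [Prod.snd_sub, ← smul_sub]
        exact hscale (norm_symm_diff_le hM0.le (hdiffx τ hτ)
          (fun u v => (hup τ hτ u v).trans (mul_le_mul_of_nonneg_right hcM (norm_nonneg _)))
          (fun u v => hmono (hDlip τ hτ u v) (norm_nonneg _)) y z))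
    (by
      intro τ hτ
      refine norm_prod_le_iff.2 ⟨by simpa using by positivity, norm_prod_le_iff.2 ⟨?_, ?_⟩⟩
      · exact norm_sub_le_min hM0.le (fun u => (hDVbound τ hτ u).trans hCM)
          (fun u v => hmono (hDVlip τ hτ u v) (norm_nonneg _)) y z
      · simp only [Prod.snd_sub, ← smul_sub]
        exact hscale (norm_symm_diff_le hM0.le (hVdiff τ hτ)
          (fun u v => hmono (hVlip τ hτ u v) (norm_nonneg _))
          (fun u v => hmono (hDVlip τ hτ u v) (norm_nonneg _)) y z))
    t ht
  have hplus : ∀ τ, kappa N s Φ τ y (y + z) = cNs N s / 2 * r ^ (-p) * kernelFun N p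
      (fderiv ℝ (Φ τ) y, fderiv ℝ (Φ τ) (y + z), r⁻¹ • (Φ τ (y + z) - Φ τ y)) :=
    fun τ => kappa_eq_kernelFun hr0 (norm_sub_rev _ _)
  have hminus : ∀ τ, kappa N s Φ τ y (y - z) = cNs N s / 2 * r ^ (-p) * kernelFun N p
      (fderiv ℝ (Φ τ) y, fderiv ℝ (Φ τ) (y - z), r⁻¹ • (Φ τ y - Φ τ (y - z))) :=
    fun τ => kappa_eq_kernelFun hr0 rfl
  have hmin : min (r ^ (-(N : ℝ) - 2 * s)) (r ^ (1 - (N : ℝ) - 2 * s))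
      = r ^ (-p) * min 1 r := by
    have hrp : 0 ≤ r ^ (-p) := Real.rpow_nonneg hr0.le _
    rw [mul_min_of_nonneg _ _ hrp, mul_one, ← Real.rpow_add_one hr0.ne']
    congr 2 <;> rw [hp] <;> ring
  rw [hmin, hplus t, hplus 0, hminus t, hminus 0]
  set G1 := kernelFun N p
      (fderiv ℝ (Φ t) y, fderiv ℝ (Φ t) (y + z), r⁻¹ • (Φ t (y + z) - Φ t y))
  set G2 := kernelFun N p
      (fderiv ℝ (Φ 0) y, fderiv ℝ (Φ 0) (y + z), r⁻¹ • (Φ 0 (y + z) - Φ 0 y))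
  set G3 := kernelFun N p
      (fderiv ℝ (Φ t) y, fderiv ℝ (Φ t) (y - z), r⁻¹ • (Φ t y - Φ t (y - z)))
  set G4 := kernelFun N p
      (fderiv ℝ (Φ 0) y, fderiv ℝ (Φ 0) (y - z), r⁻¹ • (Φ 0 y - Φ 0 (y - z)))
  change |(G1 - G2) - (G3 - G4)| ≤ C * min 1 r * |t| at main
  generalize cNs N s / 2 = k
  have hq : 0 ≤ r ^ (-p) := Real.rpow_nonneg hr0.le _
  have e : ((k * r ^ (-p) * G1 - k * r ^ (-p) * G2) / t
      - (k * r ^ (-p) * G3 - k * r ^ (-p) * G4) / t) / 2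
      = k * r ^ (-p) * (((G1 - G2) - (G3 - G4)) / t) / 2 := by ring
  have hquot : |((G1 - G2) - (G3 - G4)) / t| ≤ C * min 1 r := by
    rw [abs_div, div_le_iff₀ (abs_pos.2 ht0)]
    exact main
  rw [e, abs_div, abs_mul, abs_mul, abs_of_nonneg hq, abs_two]
  calc |k| * r ^ (-p) * |((G1 - G2) - (G3 - G4)) / t| / 2
      ≤ |k| * r ^ (-p) * |((G1 - G2) - (G3 - G4)) / t| := half_le_self (by positivity)
    _ ≤ (|k| + 1) * r ^ (-p) * (C * min 1 r) := by gcongr; linarith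
    _ = (|k| + 1) * C * (r ^ (-p) * min 1 r) := by ring
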